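/- arXiv:1809.11012 — 2 statements merged into one kernel-verified Lean document; each statement's English description precedes it below -/
import Mathlib

section
/- Let κ, c_s, c_p > 0 and n ∈ ℕ. Then there exist ε > 0 and M > 0 such that for all 0 < r < ε, |ξ_{2,n}(r) − (1/(2c_s²) − 1/(2c_p²))| ≤ M r²; in particular ξ_{2,n}(r) → −1/(2c_p²) + 1/(2c_s²) as r → 0⁺. -/
open Real Filter MeasureTheory

noncomputable def acoef (γ : ℝ) : ℕ → ℕ → ℝ
  | n, m =>
    if m = 0 then 1
    else if n < m then 0
    else if m = n then -(γ / (n : ℝ)) * acoef γ (n - 1) (n - 1)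
    else (1 / (2 * γ * (m : ℝ))) *
      (4 * (((m + 1) / 2 : ℕ) : ℝ) ^ 2 * acoef γ n (m + 1)
        - γ ^ 2 * ∑ k ∈ (Finset.Icc (m - 1) (n - 1)).attach,
            ((n - (k : ℕ) + 1 : ℕ) : ℝ) * acoef γ (k : ℕ) (m - 1))
  termination_by n m => (n, n - m)
  decreasing_by
  · apply Prod.Lex.left; omega
  · apply Prod.Lex.right; omega
  · apply Prod.Lex.left
    have hk := k.2
    simp only [Finset.mem_Icc] at hk
    omega

/-- χ_{k,n} -/
noncomputable def chiC (n : ℕ) (k : ℤ) : ℝ :=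
  if k = -2 then (n : ℝ) * ((n : ℝ) - 1)
  else if k = -1 then -4 * (n : ℝ) ^ 2
  else if k = 0 then 2 * (3 * (n : ℝ) ^ 2 + 3 * (n : ℝ) + 1)
  else if k = 1 then -4 * ((n : ℝ) + 1) ^ 2
  else if k = 2 then ((n : ℝ) + 1) * ((n : ℝ) + 2)
  else 0

/-- the sum ∑_{k=-2}^{2} χ_{k,n} f(n+k), terms with n+k<0 omitted -/
noncomputable def sumChi (n : ℕ) (f : ℕ → ℝ) : ℝ :=
  ∑ k ∈ Finset.Icc (-2 : ℤ) 2,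
    if 0 ≤ (n : ℤ) + k then chiC n k * f ((n : ℤ) + k).toNat else 0

noncomputable def besselI0 (z : ℝ) : ℝ := ∑' k : ℕ, (z / 2) ^ (2 * k) / (k.factorial : ℝ) ^ 2

noncomputable def besselI1 (z : ℝ) : ℝ :=
  ∑' k : ℕ, (z / 2) ^ (2 * k + 1) / ((k.factorial : ℝ) * ((k + 1).factorial : ℝ))

noncomputable def psiH (k : ℕ) : ℝ := ∑ j ∈ Finset.range k, (1 : ℝ) / ((j : ℝ) + 1)

noncomputable def besselS0 (z : ℝ) : ℝ :=
  ∑' k : ℕ, psiH k * (z / 2) ^ (2 * k) / (k.factorial : ℝ) ^ 2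

noncomputable def besselS1 (z : ℝ) : ℝ :=
  -(1 / 2) * ∑' k : ℕ, (psiH (k + 1) + psiH k) * (z / 2) ^ (2 * k + 1) /
    ((k.factorial : ℝ) * ((k + 1).factorial : ℝ))

noncomputable def vPol (γ : ℝ) (n : ℕ) (r : ℝ) : ℝ :=
  ∑ m ∈ Finset.range (n / 2 + 1), acoef γ n (2 * m) * r ^ (2 * m)

noncomputable def wPol (γ : ℝ) (n : ℕ) (r : ℝ) : ℝ :=
  ∑ m ∈ Finset.range ((n - 1) / 2 + 1), acoef γ n (2 * m + 1) * r ^ (2 * m + 1)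

noncomputable def vTil (γ : ℝ) (n : ℕ) (r : ℝ) : ℝ :=
  2 * ∑ m ∈ Finset.Icc 1 (n / 2), (m : ℝ) * acoef γ n (2 * m) * r ^ (2 * m)
    - γ * ∑ m ∈ Finset.range ((n - 1) / 2 + 1), acoef γ n (2 * m + 1) * r ^ (2 * m + 2)

noncomputable def wTil (γ : ℝ) (n : ℕ) (r : ℝ) : ℝ :=
  2 * ∑ m ∈ Finset.Icc 1 ((n - 1) / 2), (m : ℝ) * acoef γ n (2 * m + 1) * r ^ (2 * m + 1)
    - γ * ∑ m ∈ Finset.range (n / 2 + 1), acoef γ n (2 * m) * r ^ (2 * m + 1)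

noncomputable def phiF (γ : ℝ) (n : ℕ) (r : ℝ) : ℝ :=
  -besselI0 (γ * r) * vPol γ n r + besselI1 (γ * r) * wPol γ n r

noncomputable def phiHat (γ : ℝ) (n : ℕ) (r : ℝ) : ℝ :=
  (-(Real.eulerMascheroniConstant + Real.log (γ / 2)) * besselI0 (γ * r) + besselS0 (γ * r)) * vPol γ n r
    + (1 / (γ * r) + (Real.eulerMascheroniConstant + Real.log (γ / 2)) * besselI1 (γ * r)
        + besselS1 (γ * r)) * wPol γ n r

noncomputable def phiTil (γ : ℝ) (n : ℕ) (r : ℝ) : ℝ :=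
  -besselI0 (γ * r) * vTil γ n r + besselI1 (γ * r) * wTil γ n r

noncomputable def phiHatTil (γ : ℝ) (n : ℕ) (r : ℝ) : ℝ :=
  (-(Real.eulerMascheroniConstant + Real.log (γ / 2)) * besselI0 (γ * r) + besselS0 (γ * r)) * vTil γ n r
    + (1 / (γ * r) + (Real.eulerMascheroniConstant + Real.log (γ / 2)) * besselI1 (γ * r)
        + besselS1 (γ * r)) * wTil γ n r

noncomputable def etaF (κ cs cp : ℝ) (ℓ n : ℕ) (r : ℝ) : ℝ :=
  (-(ℓ : ℝ)) ^ (ℓ - 1) / (κ ^ 2 * r ^ 2) *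
      sumChi n (fun j => phiF (κ / cs) j r - phiF (κ / cp) j r)
    + (-1 : ℝ) ^ (ℓ - 1) / cp ^ 2 * phiF (κ / cp) n r
    + ((ℓ : ℝ) - 1) / cs ^ 2 * phiF (κ / cs) n r

noncomputable def xiF (κ cs cp : ℝ) (ℓ n : ℕ) (r : ℝ) : ℝ :=
  (-(ℓ : ℝ)) ^ (ℓ - 1) / (κ ^ 2 * r ^ 2) *
      sumChi n (fun j => phiHat (κ / cs) j r - phiHat (κ / cp) j r)
    + (-1 : ℝ) ^ (ℓ - 1) / cp ^ 2 * phiHat (κ / cp) n r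
    + ((ℓ : ℝ) - 1) / cs ^ 2 * phiHat (κ / cs) n r

noncomputable def etaTil (κ cs cp : ℝ) (ℓ n : ℕ) (r : ℝ) : ℝ :=
  (-(ℓ : ℝ)) ^ (ℓ - 1) / (κ ^ 2 * r ^ 2) *
      sumChi n (fun j => phiTil (κ / cs) j r - 2 * phiF (κ / cs) j r
        + 2 * phiF (κ / cp) j r - phiTil (κ / cp) j r)
    + (-1 : ℝ) ^ (ℓ - 1) / cp ^ 2 * phiTil (κ / cp) n r
    + ((ℓ : ℝ) - 1) / cs ^ 2 * phiTil (κ / cs) n r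

noncomputable def xiTil (κ cs cp : ℝ) (ℓ n : ℕ) (r : ℝ) : ℝ :=
  (-(ℓ : ℝ)) ^ (ℓ - 1) / (κ ^ 2 * r ^ 2) *
      sumChi n (fun j => phiHatTil (κ / cs) j r - 2 * phiHat (κ / cs) j r
        + 2 * phiHat (κ / cp) j r - phiHatTil (κ / cp) j r)
    + (-1 : ℝ) ^ (ℓ - 1) / cp ^ 2 * phiHatTil (κ / cp) n r
    + ((ℓ : ℝ) - 1) / cs ^ 2 * phiHatTil (κ / cs) n r

/-- Auxiliary coefficients: `acoef γ n m = γ ^ m * cc n m`. -/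
noncomputable def cc : ℕ → ℕ → ℝ
  | 0, m => if m = 0 then 1 else 0
  | _ + 1, 0 => 1
  | n + 1, m + 1 =>
    (((n : ℝ) + 1 + 2 * (((m + 1) / 2 : ℕ) : ℝ)) * cc n (m + 1) - cc n m) / ((n : ℝ) + 1)

theorem cc_zero (n : ℕ) : cc n 0 = 1 := by
  cases n <;> simp [cc]

theorem cc_rec (n m : ℕ) : ((n : ℝ) + 1) * cc (n + 1) (m + 1) =
    ((n : ℝ) + 1 + 2 * (((m + 1) / 2 : ℕ) : ℝ)) * cc n (m + 1) - cc n m := by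
  have : (n : ℝ) + 1 ≠ 0 := by positivity
  rw [cc]; field_simp

theorem cc_lt (n m : ℕ) (h : n < m) : cc n m = 0 := by
  induction n generalizing m with
  | zero => simp [cc]; omega
  | succ n ih =>
    obtain ⟨m, rfl⟩ : ∃ k, m = k + 1 := ⟨m - 1, by omega⟩
    rw [cc, ih _ (by omega), ih _ (by omega)]; simp

/-- The convolution sum. -/
noncomputable def TT (c : ℕ → ℝ) (n : ℕ) : ℝ := ∑ k ∈ Finset.range n, ((n : ℝ) - k + 1) * c k

theorem TT_succ (c : ℕ → ℝ) (n : ℕ) :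
    TT c (n + 1) = TT c n + ∑ k ∈ Finset.range n, c k + 2 * c n := by
  unfold TT
  rw [Finset.sum_range_succ, ← Finset.sum_add_distrib]
  congr 1
  · apply Finset.sum_congr rfl
    intros; push_cast; ring
  · push_cast; ring

theorem SS_rec (c d : ℕ → ℝ) (α : ℝ)
    (h : ∀ n : ℕ, ((n : ℝ) + 1) * c (n + 1) = ((n : ℝ) + α) * c n - d n) (n : ℕ) :
    (n : ℝ) * c n = α * ∑ k ∈ Finset.range n, c k - ∑ k ∈ Finset.range n, d k := by
  induction n with
  | zero => simp
  | succ n ih =>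
    rw [Finset.sum_range_succ, Finset.sum_range_succ]
    push_cast
    linear_combination ih + h n

theorem TT_rec0 (c d : ℕ → ℝ) (α : ℝ)
    (h : ∀ n : ℕ, ((n : ℝ) + 1) * c (n + 1) = ((n : ℝ) + α) * c n - d n) (n : ℕ) :
    ((n : ℝ) + 1) * ∑ k ∈ Finset.range n, c k + 2 * n * c n = (1 + α) * TT c n - TT d n := by
  induction n with
  | zero => simp [TT]
  | succ n ih =>
    rw [TT_succ, TT_succ, Finset.sum_range_succ]
    push_cast
    linear_combination ih + 2 * h n + SS_rec c d α h n

theorem TT_rec (c d : ℕ → ℝ) (α : ℝ)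
    (h : ∀ n : ℕ, ((n : ℝ) + 1) * c (n + 1) = ((n : ℝ) + α) * c n - d n) (n : ℕ) :
    ((n : ℝ) + 1) * TT c (n + 1) = ((n : ℝ) + 2 + α) * TT c n + 2 * c n - TT d n := by
  rw [TT_succ]
  linear_combination TT_rec0 c d α h n

theorem cc_main (n m : ℕ) : 2 * ((m : ℝ) + 1) * cc n (m + 1) =
    4 * (((m + 2) / 2 : ℕ) : ℝ) ^ 2 * cc n (m + 2) - TT (fun k => cc k m) n := by
  induction n generalizing m with
  | zero => simp [cc, TT]
  | succ n ih =>
    have hn : (n : ℝ) + 1 ≠ 0 := by positivity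
    apply mul_left_cancel₀ hn
    have r1 := cc_rec n (m + 1)
    have r2 := cc_rec n m
    have i1 := ih m
    cases m with
    | zero =>
      have t := TT_rec (fun k => cc k 0) (fun _ => 0) 1 (by intro n; simp [cc_zero]) n
      have t0 : TT (fun _ => (0 : ℝ)) n = 0 := by simp [TT]
      have z := cc_zero n
      norm_num at r1 r2 i1 t
      rw [t0] at t
      rw [z] at r2 t
      norm_num [-mul_eq_mul_left_iff]
      linear_combination 4 * (-r1) + 2 * r2 + t + (n + 3) * i1
    | succ m =>
      have t := TT_rec (fun k => cc k (m + 1)) (fun k => cc k m)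
        (1 + 2 * (((m + 1) / 2 : ℕ) : ℝ)) (by intro n; rw [cc_rec]; ring) n
      have i2 := ih m
      have e1 : (m + 1 + 2) / 2 = (m + 1) / 2 + 1 := by omega
      have e2 : (m + 1 + 1 + 1) / 2 = (m + 1) / 2 + 1 := by omega
      have e3 : (m + 1 + 1) / 2 = (m + 2) / 2 := by omega
      rw [e1] at i1 ⊢
      rw [e2] at r1
      rw [e3] at r2
      have e4 : (((m + 1) / 2 : ℕ) : ℝ) = m + 1 - (((m + 2) / 2 : ℕ) : ℝ) := by
        have : (m + 1) / 2 + (m + 2) / 2 = m + 1 := by omega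
        rw [eq_sub_iff_add_eq]; exact_mod_cast this
      push_cast at r1 r2 i1 i2 t ⊢
      rw [e4] at r1 t i1 ⊢
      generalize (((m + 2) / 2 : ℕ) : ℝ) = f at *
      linear_combination (-4 * (m + 2 - f) ^ 2) * r1 + 2 * (m + 2) * r2 + t
        + (n + 3 + 2 * (m + 1 - f)) * i1 - i2

theorem acoef_eq (γ : ℝ) (hγ : 0 < γ) (n m : ℕ) : acoef γ n m = γ ^ m * cc n m := by
  induction n using Nat.strong_induction_on generalizing m with
  | _ n ihn =>
  have key : ∀ d m, n - m = d → acoef γ n m = γ ^ m * cc n m := by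
    intro d
    induction d with
    | zero =>
      intro m hm
      rw [acoef]
      split_ifs with h0 h1 h2
      · subst h0; simp [cc_zero]
      · simp [cc_lt n m h1]
      · subst h2
        obtain ⟨k, rfl⟩ : ∃ k, m = k + 1 := ⟨m - 1, by omega⟩
        have := cc_rec k k
        rw [cc_lt k (k + 1) (by omega)] at this
        simp only [Nat.add_sub_cancel]
        rw [ihn k (by omega)]
        have hk : (k : ℝ) + 1 ≠ 0 := by positivity
        push_cast
        field_simp
        linear_combination (- γ ^ (k + 1)) * this
      · omega
    | succ d ih =>
      intro m hm
      rw [acoef]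
      split_ifs with h0 h1 h2
      · subst h0; simp [cc_zero]
      · omega
      · omega
      · obtain ⟨k, rfl⟩ : ∃ k, m = k + 1 := ⟨m - 1, by omega⟩
        simp only [Nat.add_sub_cancel]
        rw [ih (k + 1 + 1) (by omega)]
        rw [Finset.sum_attach (Finset.Icc (k + 1 - 1) (n - 1))
          (fun x => ((n - x + 1 : ℕ) : ℝ) * acoef γ x k)]
        have hs : ∑ x ∈ Finset.Icc (k + 1 - 1) (n - 1), ((n - x + 1 : ℕ) : ℝ) * acoef γ x k
            = γ ^ k * TT (fun x => cc x k) n := by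
          unfold TT
          rw [Finset.mul_sum, Nat.add_sub_cancel]
          have hsub : Finset.Icc k (n - 1) ⊆ Finset.range n := by
            intro x; simp only [Finset.mem_Icc, Finset.mem_range]; omega
          rw [← Finset.sum_subset hsub (f := fun x => γ ^ k * (((n : ℝ) - x + 1) * cc x k))]
          · apply Finset.sum_congr rfl
            intro x hx
            simp only [Finset.mem_Icc] at hx
            rw [ihn x (by omega)]
            push_cast [Nat.cast_sub (show x ≤ n by omega)]
            ring
          · intro x hx hx2
            simp only [Finset.mem_Icc, Finset.mem_range] at hx hx2
            rw [cc_lt x k (by omega)]; simp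
        rw [hs]
        have := cc_main n k
        have hk : (k : ℝ) + 1 ≠ 0 := by positivity
        push_cast
        field_simp
        linear_combination (-γ ^ (k + 2)) * this
  exact key _ m rfl

theorem cc_two (n : ℕ) : cc n 2 = cc n 1 / 2 + (n : ℝ) * (n + 3) / 8 := by
  induction n with
  | zero => simp [cc]
  | succ n ih =>
    have hn : (n : ℝ) + 1 ≠ 0 := by positivity
    apply mul_left_cancel₀ hn
    have r1 := cc_rec n 0
    have r2 := cc_rec n 1
    rw [cc_zero n] at r1
    norm_num at r1 r2
    push_cast
    linear_combination r2 + (n + 3) * ih - r1 / 2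

theorem cc_three (n : ℕ) : cc n 3 = cc n 2 +
    ((n : ℝ) * (n + 3) * cc n 1 + (3 * n ^ 2 + 5 * n) / 2) / 8 := by
  induction n with
  | zero => simp [cc]
  | succ n ih =>
    have hn : (n : ℝ) + 1 ≠ 0 := by positivity
    apply mul_left_cancel₀ hn
    have r1 := cc_rec n 0
    have r2 := cc_rec n 1
    have r3 := cc_rec n 2
    have t := cc_two n
    rw [cc_zero n] at r1
    norm_num at r1 r2 r3
    push_cast
    linear_combination r3 + (n + 3) * ih - r2 - (n + 1) * (n + 4) / 8 * r1 - t

theorem sumChi_zero (f : ℕ → ℝ) : sumChi 0 f = 2 * f 0 - 4 * f 1 + 2 * f 2 := by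
  have : Finset.Icc (-2 : ℤ) 2 = {-2, -1, 0, 1, 2} := by decide
  simp [sumChi, this, chiC]; ring

theorem sumChi_one (f : ℕ → ℝ) :
    sumChi 1 f = -4 * f 0 + 14 * f 1 - 16 * f 2 + 6 * f 3 := by
  have : Finset.Icc (-2 : ℤ) 2 = {-2, -1, 0, 1, 2} := by decide
  simp [sumChi, this, chiC]; norm_num; ring

theorem sumChi_add (n : ℕ) (f : ℕ → ℝ) : sumChi (n + 2) f =
    ((n : ℝ) + 2) * (n + 1) * f n - 4 * ((n : ℝ) + 2) ^ 2 * f (n + 1)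
    + 2 * (3 * ((n : ℝ) + 2) ^ 2 + 3 * ((n : ℝ) + 2) + 1) * f (n + 2)
    - 4 * ((n : ℝ) + 3) ^ 2 * f (n + 3) + ((n : ℝ) + 3) * (n + 4) * f (n + 4) := by
  have : Finset.Icc (-2 : ℤ) 2 = {-2, -1, 0, 1, 2} := by decide
  have h1 : (0 : ℤ) ≤ (n : ℤ) + 2 + -1 := by omega
  have h2 : (0 : ℤ) ≤ (n : ℤ) + 2 := by omega
  have h3 : (0 : ℤ) ≤ (n : ℤ) + 2 + 1 := by omega
  have h4 : (0 : ℤ) ≤ (n : ℤ) + 2 + 2 := by omega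
  have g1 : ((n : ℤ) + 2 + -1).toNat = n + 1 := by omega
  have g2 : ((n : ℤ) + 2).toNat = n + 2 := by omega
  have g3 : ((n : ℤ) + 2 + 1).toNat = n + 3 := by omega
  have g4 : ((n : ℤ) + 2 + 2).toNat = n + 4 := by omega
  simp [sumChi, this, chiC, h1, h2, h3, h4, g1, g2, g3, g4]; ring

/-- zeroth order coefficient -/
noncomputable def AA (L : ℝ) (n : ℕ) : ℝ := -L + cc n 1
/-- second order coefficient divided by `γ²` -/
noncomputable def BB (L : ℝ) (n : ℕ) : ℝ :=
  (1 - L) / 4 - L * cc n 2 + cc n 3 + L * cc n 1 / 2 - cc n 1 / 4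

theorem sumChi_const (n : ℕ) (x y : ℝ) : sumChi n (fun j => AA x j - AA y j) = 0 := by
  obtain rfl | rfl | ⟨n, rfl⟩ : n = 0 ∨ n = 1 ∨ ∃ k, n = k + 2 := by
    rcases n with _ | _ | n <;> simp
  · rw [sumChi_zero]; simp only [AA]; ring
  · rw [sumChi_one]; simp only [AA]; ring
  · rw [sumChi_add]; simp only [AA]; ring

theorem cc_one_succ (n : ℕ) : cc (n + 1) 1 = cc n 1 - 1 / ((n : ℝ) + 1) := by
  have hn : (n : ℝ) + 1 ≠ 0 := by positivity
  have r1 := cc_rec n 0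
  rw [cc_zero] at r1
  norm_num at r1
  field_simp
  linear_combination r1

theorem sumChi_BB (n : ℕ) (L : ℝ) : sumChi n (BB L) = (AA L n - 1 / 2) / 2 := by
  obtain rfl | rfl | ⟨n, rfl⟩ : n = 0 ∨ n = 1 ∨ ∃ k, n = k + 2 := by
    rcases n with _ | _ | n <;> simp
  · rw [sumChi_zero]; simp only [AA, BB, cc_three, cc_two]
    norm_num [cc]; ring
  · rw [sumChi_one]; simp only [AA, BB, cc_three, cc_two]
    norm_num [cc]; ring
  · rw [sumChi_add]; simp only [AA, BB, cc_three, cc_two, cc_one_succ]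
    have h1 : (n : ℝ) + 1 ≠ 0 := by positivity
    have h2 : (n : ℝ) + 1 + 1 ≠ 0 := by positivity
    have h3 : (n : ℝ) + 2 + 1 ≠ 0 := by positivity
    have h4 : (n : ℝ) + 3 + 1 ≠ 0 := by positivity
    push_cast
    field_simp
    ring

/-- `f r = a + b r² + O(r⁴)` as `r → 0⁺`. -/
def Ex (f : ℝ → ℝ) (a b : ℝ) : Prop :=
  Asymptotics.IsBigO (nhdsWithin 0 (Set.Ioi 0)) (fun r => f r - (a + b * r ^ 2))
    (fun r : ℝ => r ^ 4)

theorem Ex.congr {f g : ℝ → ℝ} {a b a' b' : ℝ} (h : Ex f a b)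
    (hfg : ∀ r, 0 < r → g r = f r) (ha : a' = a) (hb : b' = b) : Ex g a' b' := by
  subst ha hb
  refine Asymptotics.IsBigO.congr' h ?_ Filter.EventuallyEq.rfl
  filter_upwards [self_mem_nhdsWithin] with r hr
  rw [hfg r hr]

theorem Ex.exact (a b : ℝ) : Ex (fun r => a + b * r ^ 2) a b := by
  simp [Ex, Asymptotics.isBigO_zero]

theorem Ex.add {f g : ℝ → ℝ} {a b c d : ℝ} (hf : Ex f a b) (hg : Ex g c d) :
    Ex (fun r => f r + g r) (a + c) (b + d) := by
  refine (Asymptotics.IsBigO.add hf hg).congr_left ?_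
  intro r; ring

theorem Ex.smul {f : ℝ → ℝ} {a b : ℝ} (c : ℝ) (hf : Ex f a b) :
    Ex (fun r => c * f r) (c * a) (c * b) := by
  refine (Asymptotics.IsBigO.const_mul_left hf c).congr_left ?_
  intro r; ring

theorem isBigO_one_of_cont (f : ℝ → ℝ) (hf : Continuous f) :
    Asymptotics.IsBigO (nhdsWithin 0 (Set.Ioi 0)) f (fun _ : ℝ => (1 : ℝ)) :=
  ((hf.tendsto 0).mono_left nhdsWithin_le_nhds).isBigO_one ℝ

theorem Ex.bdd {f : ℝ → ℝ} {a b : ℝ} (hf : Ex f a b) :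
    Asymptotics.IsBigO (nhdsWithin 0 (Set.Ioi 0)) f (fun _ : ℝ => (1 : ℝ)) := by
  have h1 := Asymptotics.IsBigO.trans hf (isBigO_one_of_cont (fun r => r ^ 4) (by fun_prop))
  have h2 := h1.add (isBigO_one_of_cont (fun r => a + b * r ^ 2) (by fun_prop))
  exact h2.congr_left (by intro r; ring)

theorem Ex.mul {f g : ℝ → ℝ} {a b c d : ℝ} (hf : Ex f a b) (hg : Ex g c d) :
    Ex (fun r => f r * g r) (a * c) (a * d + b * c) := by
  have h1 := Asymptotics.IsBigO.mul hf hg.bdd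
  have h2 := Asymptotics.IsBigO.mul (isBigO_one_of_cont (fun r => a + b * r ^ 2) (by fun_prop)) hg
  have h3 := Asymptotics.IsBigO.mul (isBigO_one_of_cont (fun _ => b * d) (by fun_prop))
    (Asymptotics.isBigO_refl (fun r : ℝ => r ^ 4) (nhdsWithin 0 (Set.Ioi 0)))
  simp only [mul_one, one_mul] at h1 h2 h3
  refine ((h1.add h2).add h3).congr_left ?_
  intro r; ring

theorem Ex.sum {ι : Type*} (s : Finset ι) (f : ι → ℝ → ℝ) (a b : ι → ℝ)
    (h : ∀ i ∈ s, Ex (f i) (a i) (b i)) :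
    Ex (fun r => ∑ i ∈ s, f i r) (∑ i ∈ s, a i) (∑ i ∈ s, b i) := by
  refine (Asymptotics.IsBigO.sum (g := fun r : ℝ => r ^ 4) h).congr_left ?_
  intro r
  rw [Finset.sum_apply, Finset.sum_sub_distrib, Finset.sum_add_distrib, Finset.sum_mul]

theorem Ex.sumChi {f : ℕ → ℝ → ℝ} {a b : ℕ → ℝ} (n : ℕ) (h : ∀ j, Ex (f j) (a j) (b j)) :
    Ex (fun r => sumChi n (fun j => f j r)) (sumChi n a) (sumChi n b) := by
  unfold _root_.sumChi
  apply Ex.sum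
  intro k _
  split_ifs
  · exact (h _).smul _
  · exact (Ex.exact 0 0).congr (by intros; simp) rfl rfl

theorem Ex.tsum (d : ℕ → ℝ) (hd : Summable d) (hn : ∀ k, 0 ≤ d k) :
    Ex (fun r => ∑' k, d k * r ^ (2 * k)) (d 0) (d 1) := by
  refine Asymptotics.IsBigO.of_bound (∑' k, d (k + 2)) ?_
  have hlt : ∀ᶠ r in nhdsWithin (0 : ℝ) (Set.Ioi 0), r < 1 :=
    nhdsWithin_le_nhds (Iio_mem_nhds one_pos)
  filter_upwards [self_mem_nhdsWithin, hlt] with r hr hr1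
  have hr : 0 < r := hr
  have hs2 : Summable fun k => d (k + 2) := (summable_nat_add_iff 2).2 hd
  have hle : ∀ k, d k * r ^ (2 * k) ≤ d k := fun k =>
    mul_le_of_le_one_right (hn k) (pow_le_one₀ hr.le hr1.le)
  have hs : Summable fun k => d k * r ^ (2 * k) :=
    Summable.of_nonneg_of_le (fun k => by have := hn k; positivity) hle hd
  have hs' : Summable fun k => d (k + 2) * r ^ (2 * k) :=
    Summable.of_nonneg_of_le (fun k => by have := hn (k + 2); positivity)
      (fun k => mul_le_of_le_one_right (hn _) (pow_le_one₀ hr.le hr1.le)) hs2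
  rw [← hs.sum_add_tsum_nat_add 2]
  have e : ∀ k, d (k + 2) * r ^ (2 * (k + 2)) = d (k + 2) * r ^ (2 * k) * r ^ 4 := by
    intro k; ring
  simp_rw [e]
  rw [tsum_mul_right]
  have : (∑ i ∈ Finset.range 2, d i * r ^ (2 * i)) +
      (∑' k, d (k + 2) * r ^ (2 * k)) * r ^ 4 - (d 0 + d 1 * r ^ 2)
      = (∑' k, d (k + 2) * r ^ (2 * k)) * r ^ 4 := by
    simp [Finset.sum_range_succ]
  rw [this, norm_mul]
  gcongr
  rw [Real.norm_of_nonneg (tsum_nonneg fun k => by have := hn (k + 2); positivity)]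
  exact hs'.tsum_le_tsum (fun k => mul_le_of_le_one_right (hn _) (pow_le_one₀ hr.le hr1.le)) hs2

theorem Ex.finsum (d : ℕ → ℝ) (N : ℕ) (h0 : 0 < N) (hN : N ≤ 1 → d 1 = 0) :
    Ex (fun r => ∑ m ∈ Finset.range N, d m * r ^ (2 * m)) (d 0) (d 1) := by
  have hpow : ∀ m : ℕ, Ex (fun r => r ^ (2 * (m + 2))) 0 0 := by
    intro m
    unfold Ex
    have h3 := Asymptotics.IsBigO.mul (isBigO_one_of_cont (fun r => r ^ (2 * m)) (by fun_prop))
      (Asymptotics.isBigO_refl (fun r : ℝ => r ^ 4) (nhdsWithin 0 (Set.Ioi 0)))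
    simp only [one_mul] at h3
    refine h3.congr_left ?_
    intro r; ring
  obtain rfl | ⟨M, rfl⟩ : N = 1 ∨ ∃ M, N = M + 2 := by
    rcases N with _ | _ | N
    · omega
    · simp
    · right; exact ⟨N, rfl⟩
  · exact (Ex.exact (d 0) 0).congr (by intros; simp) rfl (hN le_rfl)
  · have hs := Ex.sum (Finset.range M) (fun m r => d (m + 2) * r ^ (2 * (m + 2)))
      (fun m => d (m + 2) * 0) (fun m => d (m + 2) * 0) (fun m _ => (hpow m).smul _)
    refine (hs.add (Ex.exact (d 0) (d 1))).congr ?_ (by simp) (by simp)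
    intro r _
    rw [Finset.sum_range_succ', Finset.sum_range_succ']
    simp; ring

theorem psiH_nonneg (k : ℕ) : 0 ≤ psiH k := Finset.sum_nonneg fun j _ => by positivity

theorem psiH_le (k : ℕ) : psiH k ≤ k := by
  unfold psiH
  refine (Finset.sum_le_card_nsmul _ _ 1 ?_).trans (by simp)
  intro j _
  rw [div_le_one (by positivity)]
  have : (0 : ℝ) ≤ j := by positivity
  linarith

theorem summ_aux (γ : ℝ) (p q : ℕ → ℝ) (C : ℝ) (hp : ∀ k, 0 ≤ p k)
    (hq : ∀ k, 0 < q k) (h : ∀ k, p k ≤ C * q k) :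
    Summable fun k : ℕ => p k * (γ / 2) ^ (2 * k) / ((k.factorial : ℝ) * q k) := by
  have hs := (Real.summable_pow_div_factorial ((γ / 2) ^ 2)).mul_left C
  refine Summable.of_nonneg_of_le ?_ ?_ hs
  · intro k
    have := hp k
    have := hq k
    have : 0 ≤ (γ / 2) ^ (2 * k) := by rw [pow_mul]; positivity
    positivity
  · intro k
    have h1 := hq k
    have h2 : 0 ≤ (γ / 2) ^ (2 * k) := by rw [pow_mul]; positivity
    have h3 : (0 : ℝ) < k.factorial := by positivity
    rw [div_le_iff₀ (by positivity), ← pow_mul]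
    have : C * ((γ / 2) ^ (2 * k) / (k.factorial : ℝ)) * ((k.factorial : ℝ) * q k)
      = (C * q k) * (γ / 2) ^ (2 * k) := by field_simp
    rw [this]
    exact mul_le_mul_of_nonneg_right (h k) h2

theorem Ex.series (γ : ℝ) (p q : ℕ → ℝ) (C : ℝ) (hp : ∀ k, 0 ≤ p k)
    (hq : ∀ k, 0 < q k) (h : ∀ k, p k ≤ C * q k) :
    Ex (fun r => ∑' k : ℕ, p k * (γ * r / 2) ^ (2 * k) / ((k.factorial : ℝ) * q k))
      (p 0 / q 0) (p 1 * (γ ^ 2 / 4) / q 1) := by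
  refine (Ex.tsum _ (summ_aux γ p q C hp hq h) ?_).congr ?_ ?_ ?_
  · intro k
    have := hp k
    have := hq k
    have : 0 ≤ (γ / 2) ^ (2 * k) := by rw [pow_mul]; positivity
    positivity
  · intro r _
    congr 1; ext k
    rw [show γ * r / 2 = γ / 2 * r by ring, mul_pow]; ring
  · simp
  · simp; ring

theorem fact_ge (k : ℕ) : (k : ℝ) ≤ k.factorial := by exact_mod_cast Nat.self_le_factorial k

theorem fact_ge_one (k : ℕ) : (1 : ℝ) ≤ k.factorial := by exact_mod_cast Nat.factorial_pos k

theorem Ex_I0 (γ : ℝ) : Ex (fun r => besselI0 (γ * r)) 1 (γ ^ 2 / 4) := by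
  refine (Ex.series γ (fun _ => 1) (fun k => k.factorial) 1 (by simp) (by intro; positivity)
    (by intro k; simpa using fact_ge_one k)).congr ?_ (by simp) (by simp)
  intro r _
  simp [besselI0, sq]

theorem Ex_S0 (γ : ℝ) : Ex (fun r => besselS0 (γ * r)) 0 (γ ^ 2 / 4) := by
  refine (Ex.series γ psiH (fun k => k.factorial) 1 psiH_nonneg (by intro; positivity)
    (by intro k; simpa using (psiH_le k).trans (fact_ge k))).congr ?_ (by simp [psiH])
    (by simp [psiH])
  intro r _
  simp [besselS0, sq]

theorem Ex_I1 (γ : ℝ) : ∃ b, Ex (fun r => besselI1 (γ * r) / r) (γ / 2) b := by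
  refine ⟨_, ((Ex.series γ (fun _ => 1) (fun k => (k + 1).factorial) 1 (by simp)
    (by intro; positivity)
    (by intro k; simpa using fact_ge_one (k + 1))).smul (γ / 2)).congr ?_ (by simp) rfl⟩
  intro r hr
  rw [besselI1, div_eq_iff hr.ne', ← tsum_mul_left, ← tsum_mul_right]
  congr 1; ext k; ring

theorem Ex_S1 (γ : ℝ) : ∃ b, Ex (fun r => besselS1 (γ * r) / r) (-γ / 4) b := by
  refine ⟨_, ((Ex.series γ (fun k => psiH (k + 1) + psiH k) (fun k => (k + 1).factorial) 2
    (fun k => add_nonneg (psiH_nonneg _) (psiH_nonneg _))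
    (by intro; positivity) ?_).smul (-γ / 4)).congr ?_ (by simp [psiH]) rfl⟩
  · intro k
    have h1 := psiH_le (k + 1)
    have h2 := psiH_le k
    have h3 := fact_ge (k + 1)
    push_cast at h1 h3
    linarith
  intro r hr
  rw [besselS1, div_eq_iff hr.ne', ← tsum_mul_left, ← tsum_mul_left, ← tsum_mul_right]
  congr 1; ext k; ring

theorem Ex_v (γ : ℝ) (hγ : 0 < γ) (n : ℕ) : Ex (vPol γ n) 1 (γ ^ 2 * cc n 2) := by
  refine (Ex.finsum (fun m => acoef γ n (2 * m)) (n / 2 + 1) (by omega) ?_).congr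
    (fun r _ => rfl) ?_ ?_
  · intro h; rw [acoef_eq γ hγ, cc_lt _ _ (by omega)]; simp
  · simp only [acoef_eq γ hγ]; simp [cc_zero]
  · simp only [acoef_eq γ hγ]

theorem Ex_w (γ : ℝ) (hγ : 0 < γ) (n : ℕ) :
    Ex (fun r => wPol γ n r / r) (γ * cc n 1) (γ ^ 3 * cc n 3) := by
  refine (Ex.finsum (fun m => acoef γ n (2 * m + 1)) ((n - 1) / 2 + 1) (by omega) ?_).congr
    ?_ ?_ ?_
  · intro h; rw [acoef_eq γ hγ, cc_lt _ _ (by omega)]; simp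
  · intro r hr
    rw [wPol, div_eq_iff hr.ne', Finset.sum_mul]
    apply Finset.sum_congr rfl
    intros; ring
  · simp only [acoef_eq γ hγ]; simp
  · simp only [acoef_eq γ hγ]

theorem Ex_phiHat (γ : ℝ) (hγ : 0 < γ) (n : ℕ) :
    Ex (phiHat γ n) (AA (Real.eulerMascheroniConstant + Real.log (γ / 2)) n)
      (γ ^ 2 * BB (Real.eulerMascheroniConstant + Real.log (γ / 2)) n) := by
  unfold phiHat AA BB
  generalize Real.eulerMascheroniConstant + Real.log (γ / 2) = L
  obtain ⟨b1, h1⟩ := Ex_I1 γ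
  obtain ⟨b2, h2⟩ := Ex_S1 γ
  have hw := Ex_w γ hγ n
  have hv := Ex_v γ hγ n
  have H1 := (((Ex_I0 γ).smul (-L)).add (Ex_S0 γ)).mul hv
  have H2 := hw.smul (1 / γ)
  have H3 := (Ex.exact 0 1).mul (((h1.smul L).add h2).mul hw)
  refine ((H1.add H2).add H3).congr ?_ ?_ ?_
  · intro r hr
    field_simp
    ring
  · field_simp; ring
  · field_simp; ring

theorem final (κ cs cp : ℝ) (hκ : 0 < κ) (hcs : 0 < cs) (hcp : 0 < cp) (n : ℕ) :
    Asymptotics.IsBigO (nhdsWithin 0 (Set.Ioi 0))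
      (fun r => xiF κ cs cp 2 n r - (1 / (2 * cs ^ 2) - 1 / (2 * cp ^ 2)))
      (fun r : ℝ => r ^ 2) := by
  have hs : 0 < κ / cs := by positivity
  have hp : 0 < κ / cp := by positivity
  set Ls := Real.eulerMascheroniConstant + Real.log (κ / cs / 2) with hLs
  set Lp := Real.eulerMascheroniConstant + Real.log (κ / cp / 2) with hLp
  have Es := Ex_phiHat _ hs
  have Ep := Ex_phiHat _ hp
  rw [← hLs] at Es
  rw [← hLp] at Ep
  have H : Ex (fun r => sumChi n (fun j => phiHat (κ / cs) j r - phiHat (κ / cp) j r)) 0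
      ((κ / cs) ^ 2 * ((AA Ls n - 1 / 2) / 2) - (κ / cp) ^ 2 * ((AA Lp n - 1 / 2) / 2)) := by
    have := Ex.sumChi n (fun j => (Es j).add ((Ep j).smul (-1)))
    refine this.congr ?_ ?_ ?_
    · intro r _
      congr 1; ext j; ring
    · rw [← sumChi_const n Ls Lp]
      congr 1; ext j; ring
    · rw [← sumChi_BB, ← sumChi_BB]
      unfold sumChi
      rw [Finset.mul_sum, Finset.mul_sum, ← Finset.sum_sub_distrib]
      apply Finset.sum_congr rfl
      intro k _
      split_ifs <;> ring
  -- remainder of the sum, divided by `r ^ 2`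
  have R1 : Asymptotics.IsBigO (nhdsWithin 0 (Set.Ioi 0))
      (fun r => -2 / κ ^ 2 * ((sumChi n (fun j => phiHat (κ / cs) j r - phiHat (κ / cp) j r)
        - (0 + ((κ / cs) ^ 2 * ((AA Ls n - 1 / 2) / 2)
          - (κ / cp) ^ 2 * ((AA Lp n - 1 / 2) / 2)) * r ^ 2)) * (r ^ 2)⁻¹))
      (fun r : ℝ => r ^ 2) := by
    refine (Asymptotics.IsBigO.mul H
      (Asymptotics.isBigO_refl (fun r : ℝ => (r ^ 2)⁻¹) _)).const_mul_left _ |>.trans ?_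
    refine Asymptotics.IsBigO.of_bound 1 ?_
    filter_upwards [self_mem_nhdsWithin] with r hr
    have hr : 0 < r := hr
    have : r ^ 4 * (r ^ 2)⁻¹ = r ^ 2 := by field_simp
    rw [this, one_mul]
  have lower : ∀ {f : ℝ → ℝ} {a b : ℝ}, Ex f a b →
      Asymptotics.IsBigO (nhdsWithin 0 (Set.Ioi 0)) (fun r => f r - a) (fun r : ℝ => r ^ 2) := by
    intro f a b hf
    have h2 := Asymptotics.IsBigO.mul (isBigO_one_of_cont (fun r => r ^ 2) (by fun_prop))
      (Asymptotics.isBigO_refl (fun r : ℝ => r ^ 2) (nhdsWithin 0 (Set.Ioi 0)))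
    have h3 : Asymptotics.IsBigO (nhdsWithin 0 (Set.Ioi 0)) (fun r : ℝ => r ^ 4)
        (fun r : ℝ => r ^ 2) := by
      simp only [one_mul] at h2
      exact h2.congr_left (by intro r; ring)
    have h4 := (Asymptotics.isBigO_refl (fun r : ℝ => r ^ 2)
      (nhdsWithin 0 (Set.Ioi 0))).const_mul_left b
    exact ((Asymptotics.IsBigO.trans hf h3).add h4).congr_left (by intro r; ring)
  have R2 := (lower (Ep n)).const_mul_left (-1 / cp ^ 2)
  have R3 := (lower (Es n)).const_mul_left (1 / cs ^ 2)
  refine ((R1.add R2).add R3).congr' ?_ Filter.EventuallyEq.rfl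
  filter_upwards [self_mem_nhdsWithin] with r hr
  have hr : 0 < r := hr
  unfold xiF
  generalize sumChi n (fun j => phiHat (κ / cs) j r - phiHat (κ / cp) j r) = S
  norm_num
  field_simp
  ring

/-- ξ_{2,n}(r) = 1/(2c_s²) − 1/(2c_p²) + O(r²) as r → 0⁺. -/
theorem xi_two_asymptotics (κ cs cp : ℝ) (hκ : 0 < κ) (hcs : 0 < cs) (hcp : 0 < cp) (n : ℕ) :
    (∃ ε > (0 : ℝ), ∃ M > (0 : ℝ), ∀ r : ℝ, 0 < r → r < ε →
      |xiF κ cs cp 2 n r - (1 / (2 * cs ^ 2) - 1 / (2 * cp ^ 2))| ≤ M * r ^ 2) ∧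
    Tendsto (fun r => xiF κ cs cp 2 n r) (nhdsWithin 0 (Set.Ioi 0))
      (nhds (-(1 / (2 * cp ^ 2)) + 1 / (2 * cs ^ 2))) := by
  have H := final κ cs cp hκ hcs hcp n
  constructor
  · obtain ⟨c, hc, h⟩ := H.exists_pos
    have h := h.bound
    rw [eventually_nhdsWithin_iff, Metric.eventually_nhds_iff] at h
    obtain ⟨ε, hε, h⟩ := h
    refine ⟨ε, hε, c, hc, fun r hr hrε => ?_⟩
    have := h (y := r) (by rw [Real.dist_eq, sub_zero, abs_of_pos hr]; exact hrε) hr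
    rw [Real.norm_eq_abs, Real.norm_of_nonneg (by positivity)] at this
    exact this
  · have h0 : Tendsto (fun r : ℝ => r ^ 2) (nhdsWithin 0 (Set.Ioi 0)) (nhds 0) := by
      have : Continuous fun r : ℝ => r ^ 2 := by fun_prop
      simpa using (this.tendsto 0).mono_left (nhdsWithin_le_nhds (s := Set.Ioi 0))
    have h1 := (H.trans_tendsto h0).add_const (1 / (2 * cs ^ 2) - 1 / (2 * cp ^ 2))
    simp only [sub_add_cancel, zero_add] at h1
    rw [show -(1 / (2 * cp ^ 2)) + 1 / (2 * cs ^ 2) = 1 / (2 * cs ^ 2) - 1 / (2 * cp ^ 2) by ring]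
    exact h1
end

section
/- Let κ, c_s, c_p > 0 and n ∈ ℕ. Then there exist ε > 0 and M > 0 such that for all 0 < r < ε, |ξ̃_{1,n}(r) − (−1/(2c_p²) − 1/(2c_s²))| ≤ M r²; in particular ξ̃_{1,n}(r) → −1/(2c_p²) − 1/(2c_s²) as r → 0⁺. -/
open Real Filter MeasureTheory

/-- `f` has an even expansion `c0 + c2 r^2 + O(r^4)` on `(0,1)`. -/
def EvExp (f : ℝ → ℝ) (c0 c2 : ℝ) : Prop :=
  ∃ (h : ℝ → ℝ) (M : ℝ), ∀ r : ℝ, 0 < r → r < 1 →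
    f r = c0 + c2 * r ^ 2 + h r * r ^ 4 ∧ |h r| ≤ M

theorem EvExp.congr {f g : ℝ → ℝ} {c0 c2 d0 d2 : ℝ} (hf : EvExp f c0 c2)
    (hfg : ∀ r, 0 < r → r < 1 → g r = f r) (h0 : d0 = c0) (h2 : d2 = c2) : EvExp g d0 d2 := by
  obtain ⟨h, M, H⟩ := hf
  subst h0 h2
  exact ⟨h, M, fun r h1 h2 => ⟨(hfg r h1 h2).trans (H r h1 h2).1, (H r h1 h2).2⟩⟩

theorem EvExp.const (c : ℝ) : EvExp (fun _ => c) c 0 :=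
  ⟨fun _ => 0, 0, fun r _ _ => by simp⟩

theorem EvExp.sq : EvExp (fun r => r ^ 2) 0 1 :=
  ⟨fun _ => 0, 0, fun r _ _ => by simp⟩

theorem EvExp.add {f g : ℝ → ℝ} {c0 c2 d0 d2 : ℝ} (hf : EvExp f c0 c2) (hg : EvExp g d0 d2) :
    EvExp (fun r => f r + g r) (c0 + d0) (c2 + d2) := by
  obtain ⟨h, M, H⟩ := hf
  obtain ⟨k, N, K⟩ := hg
  refine ⟨fun r => h r + k r, M + N, fun r h1 h2 => ⟨?_, ?_⟩⟩
  · simp only [(H r h1 h2).1, (K r h1 h2).1]; ring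
  · exact (abs_add_le _ _).trans (add_le_add (H r h1 h2).2 (K r h1 h2).2)

theorem EvExp.mul {f g : ℝ → ℝ} {c0 c2 d0 d2 : ℝ} (hf : EvExp f c0 c2) (hg : EvExp g d0 d2) :
    EvExp (fun r => f r * g r) (c0 * d0) (c0 * d2 + c2 * d0) := by
  obtain ⟨h, M, H⟩ := hf
  obtain ⟨k, N, K⟩ := hg
  refine ⟨fun r => c0 * k r + c2 * d2 + c2 * (r ^ 2 * k r) + h r * (d0 + d2 * r ^ 2 + r ^ 4 * k r),
    |c0| * N + |c2| * |d2| + |c2| * (1 * N) + M * (|d0| + |d2| * 1 + 1 * N), fun r h1 h2 => ⟨?_, ?_⟩⟩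
  · simp only [(H r h1 h2).1, (K r h1 h2).1]; ring
  · have hr2 : |r ^ 2| ≤ 1 := by
      rw [abs_of_nonneg (by positivity)]; exact pow_le_one₀ h1.le h2.le
    have hr4 : |r ^ 4| ≤ 1 := by
      rw [abs_of_nonneg (by positivity)]; exact pow_le_one₀ h1.le h2.le
    have hM := (H r h1 h2).2
    have hN := (K r h1 h2).2
    have hM0 : 0 ≤ M := (abs_nonneg _).trans hM
    have hN0 : 0 ≤ N := (abs_nonneg _).trans hN
    refine (abs_add_le _ _).trans (add_le_add ((abs_add_le _ _).trans (add_le_add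
      ((abs_add_le _ _).trans (add_le_add ?_ ?_)) ?_)) ?_)
    · rw [abs_mul]; gcongr
    · rw [abs_mul]
    · rw [abs_mul, abs_mul]; gcongr
    · rw [abs_mul]
      gcongr
      refine (abs_add_le _ _).trans (add_le_add ((abs_add_le _ _).trans (add_le_add le_rfl ?_)) ?_)
      · rw [abs_mul]; gcongr
      · rw [abs_mul]; gcongr

theorem EvExp.cmul {f : ℝ → ℝ} {c0 c2 : ℝ} (c : ℝ) (hf : EvExp f c0 c2) :
    EvExp (fun r => c * f r) (c * c0) (c * c2) :=
  ((EvExp.const c).mul hf).congr (fun _ _ _ => rfl) rfl (by ring)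

theorem EvExp.series {d : ℕ → ℝ} (hd : Summable d) :
    EvExp (fun r => ∑' k, d k * r ^ (2 * k)) (d 0) (d 1) := by
  have habs : Summable (fun k => |d (k + 2)|) := (summable_nat_add_iff 2).2 hd.abs
  refine ⟨fun r => ∑' k, d (k + 2) * r ^ (2 * k), ∑' k, |d (k + 2)|, fun r h1 h2 => ?_⟩
  have hle : ∀ k, ‖d (k + 2) * r ^ (2 * k)‖ ≤ |d (k + 2)| := fun k => by
    rw [Real.norm_eq_abs, abs_mul, abs_of_nonneg (pow_nonneg h1.le _)]
    exact mul_le_of_le_one_right (abs_nonneg _) (pow_le_one₀ h1.le h2.le)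
  have hs : Summable (fun k => d (k + 2) * r ^ (2 * k)) := Summable.of_norm_bounded habs hle
  refine ⟨?_, ?_⟩
  · have hs' : Summable (fun k => d k * r ^ (2 * k)) := by
      refine (summable_nat_add_iff 2).1 ((hs.mul_right (r ^ 4)).congr fun k => ?_)
      ring
    beta_reduce
    rw [← hs'.sum_add_tsum_nat_add 2, ← tsum_mul_right]
    simp only [Finset.sum_range_succ, Finset.sum_range_zero]
    congr 1
    · ring
    · congr 1; ext k; ring
  · exact tsum_of_norm_bounded habs.hasSum hle

theorem EvExp.poly {d : ℕ → ℝ} {N : ℕ} (hd : ∀ k, N ≤ k → d k = 0) :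
    EvExp (fun r => ∑ k ∈ Finset.range N, d k * r ^ (2 * k)) (d 0) (d 1) := by
  have hs : Summable d := summable_of_ne_finset_zero (s := Finset.range N) (fun k hk => hd k (by
    simpa using hk))
  refine (EvExp.series hs).congr (fun r _ _ => ?_) rfl rfl
  rw [tsum_eq_sum (s := Finset.range N)]
  intro k hk
  rw [hd k (by simpa using hk), zero_mul]

theorem acoef_zero (γ : ℝ) (n : ℕ) : acoef γ n 0 = 1 := by
  rw [acoef]; simp

theorem acoef_gt (γ : ℝ) (n m : ℕ) (h : n < m) : acoef γ n m = 0 := by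
  rw [acoef, if_neg (by omega), if_pos h]

theorem acoef_rec (γ : ℝ) (n m : ℕ) (hm : 0 < m) (h : m < n) :
    acoef γ n m = (1 / (2 * γ * (m : ℝ))) *
      (4 * (((m + 1) / 2 : ℕ) : ℝ) ^ 2 * acoef γ n (m + 1)
        - γ ^ 2 * ∑ k ∈ Finset.Icc (m - 1) (n - 1),
            ((n - k + 1 : ℕ) : ℝ) * acoef γ k (m - 1)) := by
  rw [acoef, if_neg (by omega), if_neg (by omega), if_neg (by omega),
    Finset.sum_attach (Finset.Icc (m - 1) (n - 1))
      (fun k => ((n - k + 1 : ℕ) : ℝ) * acoef γ k (m - 1))]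

theorem acoef_diag (γ : ℝ) (n : ℕ) (hn : 0 < n) :
    acoef γ n n = -(γ / (n : ℝ)) * acoef γ (n - 1) (n - 1) := by
  conv_lhs => rw [acoef, if_neg (by omega), if_neg (by omega), if_pos rfl]

theorem acoef_hom (γ : ℝ) (hγ : γ ≠ 0) (n : ℕ) : ∀ m, acoef γ n m = γ ^ m * acoef 1 n m := by
  induction n using Nat.strong_induction_on with
  | _ n ih =>
    have key : ∀ j m, n - m = j → acoef γ n m = γ ^ m * acoef 1 n m := by
      intro j
      induction j using Nat.strong_induction_on with
      | _ j ihj =>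
        intro m hm
        rcases Nat.eq_zero_or_pos m with rfl | hpos
        · simp [acoef_zero]
        rcases lt_trichotomy n m with h | h | h
        · simp [acoef_gt _ _ _ h]
        · subst h
          rw [acoef_diag γ n hpos, acoef_diag 1 n hpos, ih (n - 1) (by omega)]
          obtain ⟨p, rfl⟩ : ∃ p, n = p + 1 := ⟨n - 1, by omega⟩
          simp only [Nat.add_sub_cancel]
          ring
        · rw [acoef_rec γ n m hpos h, acoef_rec 1 n m hpos h, ihj (n - (m + 1)) (by omega) _ rfl]
          have : ∑ k ∈ Finset.Icc (m - 1) (n - 1), ((n - k + 1 : ℕ) : ℝ) * acoef γ k (m - 1)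
              = γ ^ (m - 1) * ∑ k ∈ Finset.Icc (m - 1) (n - 1),
                ((n - k + 1 : ℕ) : ℝ) * acoef 1 k (m - 1) := by
            rw [Finset.mul_sum]
            refine Finset.sum_congr rfl fun k hk => ?_
            rw [Finset.mem_Icc] at hk
            rw [ih k (by omega)]; ring
          rw [this]
          obtain ⟨p, rfl⟩ : ∃ p, m = p + 1 := ⟨m - 1, by omega⟩
          simp only [Nat.add_sub_cancel]
          have hp : ((p + 1 : ℕ) : ℝ) ≠ 0 := by positivity
          field_simp
          ring
    exact fun m => key _ m rfl

theorem sum_aux (n : ℕ) :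
    ∑ k ∈ Finset.range n, ((n - k + 1 : ℕ) : ℝ) = ((n : ℝ) + 1) * (n + 2) / 2 - 1 := by
  rw [← Finset.sum_range_reflect]
  have : ∀ n : ℕ, ∑ j ∈ Finset.range n, ((j : ℝ) + 2) = ((n : ℝ) + 1) * (n + 2) / 2 - 1 := by
    intro n
    induction n with
    | zero => norm_num
    | succ n ih => rw [Finset.sum_range_succ, ih]; push_cast; ring
  rw [← this]
  refine Finset.sum_congr rfl fun k hk => ?_
  rw [Finset.mem_range] at hk
  have : n - (n - 1 - k) + 1 = k + 2 := by omega
  rw [this]; push_cast; ring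

theorem acoef_one (γ : ℝ) (hγ : γ ≠ 0) (n : ℕ) :
    γ * acoef γ n 1 / 2 = acoef γ n 2 - γ ^ 2 / 4 * (((n : ℝ) + 1) * (n + 2) / 2 - 1) := by
  rcases n with _ | _ | n
  · rw [acoef_gt _ _ _ (by norm_num), acoef_gt _ _ _ (by norm_num)]; norm_num
  · have h1 : acoef γ (0 + 1) 1 = -(γ / ((1 : ℕ) : ℝ)) * acoef γ 0 0 := acoef_diag γ 1 one_pos
    rw [h1, acoef_gt γ (0 + 1) 2 (by norm_num), acoef_zero]
    norm_num; ring
  · rw [acoef_rec γ (n + 2) 1 (by norm_num) (by omega), ← sum_aux]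
    have : Finset.Icc (1 - 1) (n + 2 - 1) = Finset.range (n + 2) := by
      ext; simp; omega
    rw [show n + 1 + 1 = n + 2 from rfl, this]
    simp only [Nat.sub_self, acoef_zero, mul_one]
    norm_num
    field_simp
    ring

theorem coef_summable {q : ℕ → ℝ} (hq0 : ∀ k, 0 ≤ q k) (hq : ∀ k, q k ≤ 2 * k + 1) (x : ℝ)
    {D : ℕ → ℝ} (hD : ∀ k, (k.factorial : ℝ) ≤ D k) :
    Summable (fun k => q k * x ^ (2 * k) / D k) := by
  have hs := (Real.summable_pow_div_factorial (2 * x ^ 2)).mul_left 2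
  refine Summable.of_nonneg_of_le (fun k => ?_) (fun k => ?_) hs
  · have : 0 ≤ D k := le_trans (by positivity) (hD k)
    have := hq0 k
    have : 0 ≤ x ^ (2 * k) := by rw [pow_mul]; positivity
    positivity
  · have h1 : q k ≤ 2 * 2 ^ k := by
      have : (k : ℝ) + 1 ≤ 2 ^ k := by exact_mod_cast Nat.lt_two_pow_self (n := k)
      linarith [hq k]
    have : 0 ≤ x ^ (2 * k) := by rw [pow_mul]; positivity
    have hk : (0 : ℝ) < k.factorial := by positivity
    calc q k * x ^ (2 * k) / D k ≤ (2 * 2 ^ k) * x ^ (2 * k) / k.factorial := by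
          gcongr
          exact hD k
      _ = _ := by rw [mul_pow, ← pow_mul]; ring

theorem fac_sq (k : ℕ) : (k.factorial : ℝ) ≤ (k.factorial : ℝ) ^ 2 := by
  have : (1 : ℝ) ≤ k.factorial := by exact_mod_cast Nat.succ_le_of_lt (Nat.factorial_pos k)
  nlinarith

theorem fac_mul (k : ℕ) : (k.factorial : ℝ) ≤ (k.factorial : ℝ) * ((k + 1).factorial : ℝ) := by
  have : (1 : ℝ) ≤ (k + 1).factorial := by exact_mod_cast Nat.succ_le_of_lt (Nat.factorial_pos _)
  have h2 : (0 : ℝ) < k.factorial := by positivity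
  nlinarith

theorem I0_exp (γ : ℝ) : EvExp (fun r => besselI0 (γ * r)) 1 (γ ^ 2 / 4) := by
  refine (EvExp.series (coef_summable (q := fun _ => 1) (fun _ => zero_le_one)
    (fun k => by linarith [Nat.cast_nonneg (α := ℝ) k]) (γ / 2) fac_sq)).congr (fun r _ _ => ?_) ?_ ?_
  · unfold besselI0; congr 1; ext k; rw [mul_div_right_comm γ, mul_pow]; ring
  · simp
  · simp; ring

theorem S0_exp (γ : ℝ) : EvExp (fun r => besselS0 (γ * r)) 0 (γ ^ 2 / 4) := by
  refine (EvExp.series (coef_summable (q := psiH) psiH_nonneg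
    (fun k => by linarith [Nat.cast_nonneg (α := ℝ) k, psiH_le k]) (γ / 2) fac_sq)).congr
    (fun r _ _ => ?_) ?_ ?_
  · unfold besselS0; congr 1; ext k; rw [mul_div_right_comm γ, mul_pow]; ring
  · simp [psiH]
  · simp [psiH]; ring

theorem I1_exp (γ : ℝ) : EvExp (fun r => r * besselI1 (γ * r)) 0 (γ / 2) := by
  refine ((EvExp.series (coef_summable (q := fun _ => 1) (fun _ => zero_le_one)
    (fun k => by linarith [Nat.cast_nonneg (α := ℝ) k]) (γ / 2) fac_mul)).mul
      (EvExp.sq.cmul (γ / 2))).congr (fun r _ _ => ?_) ?_ ?_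
  · unfold besselI1; rw [← tsum_mul_left, ← tsum_mul_right]
    congr 1; ext k; rw [mul_div_right_comm γ, mul_pow]; ring
  · simp
  · simp

theorem S1_exp (γ : ℝ) : EvExp (fun r => r * besselS1 (γ * r)) 0 (-γ / 4) := by
  refine ((EvExp.series (coef_summable (q := fun k => psiH (k + 1) + psiH k)
    (fun k => add_nonneg (psiH_nonneg _) (psiH_nonneg _))
    (fun k => by have := psiH_le (k + 1); push_cast at this; linarith [psiH_le k])
      (γ / 2) fac_mul)).mul (EvExp.sq.cmul (-(γ / 4)))).congr (fun r _ _ => ?_) ?_ ?_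
  · unfold besselS1; rw [← tsum_mul_left, ← tsum_mul_left, ← tsum_mul_right]
    congr 1; ext k; rw [mul_div_right_comm γ, mul_pow]; ring
  · simp
  · simp [psiH]; ring

theorem v_exp (γ : ℝ) (n : ℕ) : EvExp (vPol γ n) 1 (acoef γ n 2) := by
  refine (EvExp.poly (d := fun m => acoef γ n (2 * m)) (N := n / 2 + 1)
    (fun k hk => acoef_gt _ _ _ (by omega))).congr (fun r _ _ => rfl) ?_ rfl
  simp [acoef_zero]

theorem w_exp (γ : ℝ) (n : ℕ) :
    EvExp (fun r => wPol γ n r / r) (acoef γ n 1) (acoef γ n 3) := by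
  refine (EvExp.poly (d := fun m => acoef γ n (2 * m + 1)) (N := (n - 1) / 2 + 1)
    (fun k hk => acoef_gt _ _ _ (by omega))).congr (fun r hr _ => ?_) rfl rfl
  unfold wPol
  rw [Finset.sum_div]
  refine Finset.sum_congr rfl fun m _ => ?_
  field_simp
  ring

theorem sum_Icc_one (f : ℕ → ℝ) (N : ℕ) (h : f 0 = 0) :
    ∑ m ∈ Finset.Icc 1 N, f m = ∑ m ∈ Finset.range (N + 1), f m := by
  rw [Finset.range_eq_Ico, Finset.sum_eq_sum_Ico_succ_bot (by omega), h, zero_add]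
  rfl

theorem vt_exp (γ : ℝ) (n : ℕ) :
    EvExp (vTil γ n) 0 (2 * acoef γ n 2 - γ * acoef γ n 1) := by
  refine (((EvExp.poly (d := fun m => (m : ℝ) * acoef γ n (2 * m)) (N := n / 2 + 1)
    (fun k hk => by rw [acoef_gt _ _ _ (by omega), mul_zero])).cmul 2).add
    (((EvExp.poly (d := fun m => acoef γ n (2 * m + 1)) (N := (n - 1) / 2 + 1)
    (fun k hk => acoef_gt _ _ _ (by omega))).mul EvExp.sq).cmul (-γ))).congr (fun r hr _ => ?_) ?_ ?_
  · unfold vTil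
    rw [sum_Icc_one _ _ (by simp), Finset.sum_mul, sub_eq_add_neg, neg_mul]
    congr 4; ext m; ring
  · simp
  · simp; ring

theorem wt_exp (γ : ℝ) (n : ℕ) :
    EvExp (fun r => wTil γ n r / r) (-γ) (2 * acoef γ n 3 - γ * acoef γ n 2) := by
  refine (((EvExp.poly (d := fun m => (m : ℝ) * acoef γ n (2 * m + 1)) (N := (n - 1) / 2 + 1)
    (fun k hk => by rw [acoef_gt _ _ _ (by omega), mul_zero])).cmul 2).add
    ((EvExp.poly (d := fun m => acoef γ n (2 * m)) (N := n / 2 + 1)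
    (fun k hk => acoef_gt _ _ _ (by omega))).cmul (-γ))).congr (fun r hr _ => ?_) ?_ ?_
  · unfold wTil
    rw [sum_Icc_one _ _ (by simp), sub_div, mul_div_assoc, mul_div_assoc, Finset.sum_div,
      Finset.sum_div, sub_eq_add_neg, neg_mul]
    congr 3
    · ext m; field_simp; ring
    · congr 1; ext m; field_simp; ring
  · simp [acoef_zero]
  · simp; ring

/-- Expansion of a combination `A p + B q`, `p` even and `q` odd. -/
theorem comb_exp (γ L : ℝ) (hγ : γ ≠ 0) {p q : ℝ → ℝ} {p0 p2 q0 q2 : ℝ} (hp : EvExp p p0 p2)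
    (hq : EvExp (fun r => q r / r) q0 q2) :
    EvExp (fun r => (-L * besselI0 (γ * r) + besselS0 (γ * r)) * p r
      + (1 / (γ * r) + L * besselI1 (γ * r) + besselS1 (γ * r)) * q r)
      (-L * p0 + q0 / γ)
      (-L * p2 + (1 - L) * γ ^ 2 / 4 * p0 + q2 / γ + (L / 2 - 1 / 4) * γ * q0) := by
  have hI1 := I1_exp γ
  refine (((((I0_exp γ).cmul (-L)).add (S0_exp γ)).mul hp).add
    ((((EvExp.const (1 / γ)).add (hI1.cmul L)).add (S1_exp γ)).mul hq)).congr
    (fun r hr _ => ?_) ?_ ?_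
  · field_simp
  · ring
  · ring

theorem phiHatTil_exp (γ : ℝ) (hγ : γ ≠ 0) (n : ℕ) : ∃ c, EvExp (phiHatTil γ n) (-1) c := by
  refine ⟨_, (comb_exp γ (Real.eulerMascheroniConstant + Real.log (γ / 2)) hγ (vt_exp γ n)
    (wt_exp γ n)).congr (fun r _ _ => rfl) ?_ rfl⟩
  field_simp; ring

theorem diff_exp (γ : ℝ) (hγ : γ ≠ 0) (n : ℕ) :
    EvExp (fun r => phiHatTil γ n r - 2 * phiHat γ n r)
      (-1 + 2 * (Real.eulerMascheroniConstant + Real.log (γ / 2)) - 2 * acoef 1 n 1)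
      (-(γ ^ 2) / 8 * (((n : ℝ) + 1) * (n + 2))) := by
  have h1 := comb_exp γ (Real.eulerMascheroniConstant + Real.log (γ / 2)) hγ (vt_exp γ n)
    (wt_exp γ n)
  have h2 := comb_exp γ (Real.eulerMascheroniConstant + Real.log (γ / 2)) hγ (v_exp γ n)
    (w_exp γ n)
  refine (h1.add (h2.cmul (-2))).congr (fun r _ _ => ?_) ?_ ?_
  · unfold phiHatTil phiHat; ring
  · rw [acoef_hom γ hγ n 1]; field_simp; ring
  · have h := acoef_one γ hγ n
    have e : acoef γ n 2 = γ * acoef γ n 1 / 2 +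
      γ ^ 2 / 4 * (((n : ℝ) + 1) * (n + 2) / 2 - 1) := by linarith
    rw [e]; field_simp; ring

theorem sumChi_eq (n : ℕ) (f : ℕ → ℝ) :
    sumChi n f = (n : ℝ) * ((n : ℝ) - 1) * f (n - 2) + -4 * (n : ℝ) ^ 2 * f (n - 1)
      + 2 * (3 * (n : ℝ) ^ 2 + 3 * (n : ℝ) + 1) * f n + -4 * ((n : ℝ) + 1) ^ 2 * f (n + 1)
      + ((n : ℝ) + 1) * ((n : ℝ) + 2) * f (n + 2) := by
  have hI : Finset.Icc (-2 : ℤ) 2 = {-2, -1, 0, 1, 2} := by decide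
  unfold sumChi
  rw [hI]
  rcases n with _ | _ | n
  · simp [chiC]; norm_num; ring
  · simp [chiC]; norm_num; ring
  · have e1 : ((((n + 1 + 1 : ℕ) : ℤ)) + -2).toNat = n := by omega
    have e2 : ((((n + 1 + 1 : ℕ) : ℤ)) + -1).toNat = n + 1 := by omega
    have e3 : ((((n + 1 + 1 : ℕ) : ℤ)) + 0).toNat = n + 2 := by omega
    have e4 : ((((n + 1 + 1 : ℕ) : ℤ)) + 1).toNat = n + 3 := by omega
    have e5 : ((((n + 1 + 1 : ℕ) : ℤ)) + 2).toNat = n + 4 := by omega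
    rw [Finset.sum_insert (by decide), Finset.sum_insert (by decide), Finset.sum_insert (by decide),
      Finset.sum_insert (by decide), Finset.sum_singleton,
      if_pos (by omega), if_pos (by omega), if_pos (by omega), if_pos (by omega), if_pos (by omega),
      e1, e2, e3, e4, e5, show n + 1 + 1 - 2 = n by omega, show n + 1 + 1 - 1 = n + 1 by omega]
    simp only [chiC]
    norm_num
    ring

theorem sumChi_exp (n : ℕ) {F : ℕ → ℝ → ℝ} {c0 c2 : ℝ}
    (hF : ∀ j, EvExp (F j) c0 (c2 * (((j : ℝ) + 1) * (j + 2)))) :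
    EvExp (fun r => sumChi n (fun j => F j r)) 0 (4 * c2) := by
  refine ((((((hF (n - 2)).cmul ((n : ℝ) * ((n : ℝ) - 1))).add
    ((hF (n - 1)).cmul (-4 * (n : ℝ) ^ 2))).add
    ((hF n).cmul (2 * (3 * (n : ℝ) ^ 2 + 3 * (n : ℝ) + 1)))).add
    ((hF (n + 1)).cmul (-4 * ((n : ℝ) + 1) ^ 2))).add
    ((hF (n + 2)).cmul (((n : ℝ) + 1) * ((n : ℝ) + 2)))).congr
    (fun r _ _ => sumChi_eq n _) ?_ ?_
  · ring
  · rcases n with _ | _ | n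
    · norm_num; ring
    · norm_num; ring
    · rw [show n + 1 + 1 - 2 = n by omega, show n + 1 + 1 - 1 = n + 1 by omega]
      push_cast; ring

theorem xiTil_bound (κ cs cp : ℝ) (hκ : 0 < κ) (hcs : 0 < cs) (hcp : 0 < cp) (n : ℕ) :
    ∃ M > (0 : ℝ), ∀ r : ℝ, 0 < r → r < 1 →
      |xiTil κ cs cp 1 n r - (-(1 / (2 * cp ^ 2)) - 1 / (2 * cs ^ 2))| ≤ M * r ^ 2 := by
  have hs : κ / cs ≠ 0 := by positivity
  have hp : κ / cp ≠ 0 := by positivity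
  have hS : EvExp (fun r => sumChi n (fun j => phiHatTil (κ / cs) j r - 2 * phiHat (κ / cs) j r
        + 2 * phiHat (κ / cp) j r - phiHatTil (κ / cp) j r)) 0
        (4 * ((-((κ / cs) ^ 2) + (κ / cp) ^ 2) / 8)) := by
    refine sumChi_exp n (c0 := 2 * Real.log (κ / cs / 2) - 2 * Real.log (κ / cp / 2)) (fun j => ?_)
    refine ((diff_exp (κ / cs) hs j).add ((diff_exp (κ / cp) hp j).cmul (-1))).congr
      (fun r _ _ => ?_) ?_ ?_ <;> ring
  obtain ⟨c, hP⟩ := phiHatTil_exp (κ / cp) hp n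
  obtain ⟨h, M, H⟩ := hS
  obtain ⟨k, N, K⟩ := hP
  refine ⟨1 / κ ^ 2 * |M| + 1 / cp ^ 2 * (|c| + |N|) + 1, by positivity, fun r h1 h2 => ?_⟩
  have hH := (H r h1 h2).2.trans (le_abs_self M)
  have hK := (K r h1 h2).2.trans (le_abs_self N)
  have e : xiTil κ cs cp 1 n r - (-(1 / (2 * cp ^ 2)) - 1 / (2 * cs ^ 2))
      = (1 / κ ^ 2 * h r + 1 / cp ^ 2 * (c + k r * r ^ 2)) * r ^ 2 := by
    have a1 := (H r h1 h2).1
    simp only at a1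
    unfold xiTil
    rw [a1, (K r h1 h2).1]
    norm_num
    field_simp
    ring
  rw [e, abs_mul, abs_of_nonneg (sq_nonneg r)]
  refine mul_le_mul_of_nonneg_right ?_ (sq_nonneg r)
  have hr2 : |r ^ 2| ≤ 1 := by
    rw [abs_of_nonneg (by positivity)]; exact pow_le_one₀ h1.le h2.le
  have b1 : |1 / κ ^ 2 * h r| ≤ 1 / κ ^ 2 * |M| := by
    rw [abs_mul, abs_of_nonneg (by positivity : (0 : ℝ) ≤ 1 / κ ^ 2)]; gcongr
  have b2 : |1 / cp ^ 2 * (c + k r * r ^ 2)| ≤ 1 / cp ^ 2 * (|c| + |N|) := by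
    rw [abs_mul, abs_of_nonneg (by positivity : (0 : ℝ) ≤ 1 / cp ^ 2)]
    gcongr
    refine (abs_add_le _ _).trans (add_le_add le_rfl ?_)
    rw [abs_mul]
    calc |k r| * |r ^ 2| ≤ |N| * 1 := by gcongr
      _ = |N| := mul_one _
  linarith [abs_add_le (1 / κ ^ 2 * h r) (1 / cp ^ 2 * (c + k r * r ^ 2))]

/-- ξ̃_{1,n}(r) = −1/(2c_p²) − 1/(2c_s²) + O(r²) as r → 0⁺. -/
theorem xiTil_one_asymptotics (κ cs cp : ℝ) (hκ : 0 < κ) (hcs : 0 < cs) (hcp : 0 < cp) (n : ℕ) :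
    (∃ ε > (0 : ℝ), ∃ M > (0 : ℝ), ∀ r : ℝ, 0 < r → r < ε →
      |xiTil κ cs cp 1 n r - (-(1 / (2 * cp ^ 2)) - 1 / (2 * cs ^ 2))| ≤ M * r ^ 2) ∧
    Tendsto (fun r => xiTil κ cs cp 1 n r) (nhdsWithin 0 (Set.Ioi 0))
      (nhds (-(1 / (2 * cp ^ 2)) - 1 / (2 * cs ^ 2))) := by
  obtain ⟨M, hM, H⟩ := xiTil_bound κ cs cp hκ hcs hcp n
  refine ⟨⟨1, one_pos, M, hM, H⟩, ?_⟩
  rw [tendsto_iff_norm_sub_tendsto_zero]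
  have hlim : Tendsto (fun r : ℝ => M * r ^ 2) (nhdsWithin 0 (Set.Ioi 0)) (nhds 0) := by
    have : Tendsto (fun r : ℝ => M * r ^ 2) (nhds 0) (nhds (M * 0 ^ 2)) :=
      (by fun_prop : Continuous fun r : ℝ => M * r ^ 2).tendsto 0
    simp only [ne_eq, OfNat.ofNat_ne_zero, not_false_eq_true, zero_pow, mul_zero] at this
    exact this.mono_left nhdsWithin_le_nhds
  refine squeeze_zero' (Eventually.of_forall fun _ => norm_nonneg _) ?_ hlim
  filter_upwards [Ioo_mem_nhdsGT (one_pos : (0 : ℝ) < 1)] with r hr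
  exact H r hr.1 hr.2
end
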